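/- arXiv:1805.02072 — 2 statements merged into one kernel-verified Lean document; each statement's English description precedes it below -/
import Mathlib

section
/- Let T be a non-degenerate triangle in the plane that has a right angle (one of its angles equals π/2), and let ε > 0. Then there exists a constant C > 0 such that for every natural number n, h(n, T, ε) ≥ n³/15 − C·n². -/
open EuclideanGeometry

noncomputable section

abbrev Plane := EuclideanSpace ℝ (Fin 2)

/-- A triple of points is a (non-degenerate) triangle if its points are not collinear. -/
def IsTriangle (p : Fin 3 → Plane) : Prop := ¬ Collinear ℝ (Set.range p)

/-- The angle of the triple `p` at its `i`-th vertex. -/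
noncomputable def triAngle (p : Fin 3 → Plane) (i : Fin 3) : ℝ :=
  EuclideanGeometry.angle (p (i + 1)) (p i) (p (i + 2))

/-- `p` is ε-similar to `T`: some correspondence of vertices makes corresponding
angles differ by less than ε. -/
def EpsSimilar (ε : ℝ) (p T : Fin 3 → Plane) : Prop :=
  ∃ σ : Equiv.Perm (Fin 3), ∀ i, |triAngle p i - triAngle T (σ i)| < ε

/-- The finite set `S` forms a triangle ε-similar to `T`. -/
def FormsSimilar (ε : ℝ) (T : Fin 3 → Plane) (S : Finset Plane) : Prop :=
  ∃ p : Fin 3 → Plane, (S : Set Plane) = Set.range p ∧ IsTriangle p ∧ EpsSimilar ε p T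

/-- The number of 3-element subsets of `P` forming a triangle ε-similar to `T`. -/
noncomputable def simCount (ε : ℝ) (T : Fin 3 → Plane) (P : Finset Plane) : ℕ :=
  Set.ncard {S : Finset Plane | S ⊆ P ∧ S.card = 3 ∧ FormsSimilar ε T S}

/-- `hGeo n T ε` = maximum over `n`-point sets `P` of the number of 3-element
subsets of `P` forming a triangle ε-similar to `T`. -/
noncomputable def hGeo (n : ℕ) (T : Fin 3 → Plane) (ε : ℝ) : ℕ :=
  sSup {m | ∃ P : Finset Plane, P.card = n ∧ simCount ε T P = m}

/-- The recurrence defining the sequence `h`. -/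
def HRec (h : ℕ → ℕ) : Prop :=
  h 0 = 0 ∧ h 1 = 0 ∧ h 2 = 0 ∧
  ∀ n, 3 ≤ n → IsGreatest
    {m | ∃ a b c : ℕ, a + b + c = n ∧ a ≤ n - 1 ∧ b ≤ n - 1 ∧ c ≤ n - 1 ∧
      m = a * b * c + h a + h b + h c} (h n)

lemma isTri_iff (p : Fin 3 → Plane) : IsTriangle p ↔
    p 0 ≠ p 1 ∧ p 2 ≠ p 1 ∧ ∠ (p 0) (p 1) (p 2) ≠ 0 ∧ ∠ (p 0) (p 1) (p 2) ≠ Real.pi := by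
  unfold IsTriangle
  have : Set.range p = {p 0, p 1, p 2} := by
    ext x; simp [Fin.exists_fin_succ, eq_comm]
  rw [this, collinear_iff_eq_or_eq_or_angle_eq_zero_or_angle_eq_pi]
  tauto

lemma isTri_inj {p : Fin 3 → Plane} (h : IsTriangle p) : Function.Injective p :=
  (affineIndependent_iff_not_collinear.2 h).injective

lemma angle_of_dist (a b c a' b' c' : Plane) (h1 : dist a b = dist a' b')
    (h2 : dist c b = dist c' b') (h3 : dist a c = dist a' c') : ∠ a b c = ∠ a' b' c' := by
  unfold EuclideanGeometry.angle InnerProductGeometry.angle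
  rw [real_inner_eq_norm_mul_self_add_norm_mul_self_sub_norm_sub_mul_self_div_two,
    real_inner_eq_norm_mul_self_add_norm_mul_self_sub_norm_sub_mul_self_div_two]
  simp only [vsub_eq_sub, sub_sub_sub_cancel_right, ← dist_eq_norm, h1, h2, h3]

lemma triAngle_perm (T : Fin 3 → Plane) (σ : Equiv.Perm (Fin 3)) (j : Fin 3) :
    triAngle (T ∘ σ) j = triAngle T (σ j) := by
  have : ∀ (σ : Equiv.Perm (Fin 3)) (j : Fin 3),
      (σ (j+1) = σ j + 1 ∧ σ (j+2) = σ j + 2) ∨ (σ (j+1) = σ j + 2 ∧ σ (j+2) = σ j + 1) := by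
    decide
  unfold triAngle
  rcases this σ j with h | h
  · simp [h.1, h.2]
  · simp only [Function.comp, h.1, h.2]
    rw [EuclideanGeometry.angle_comm]

lemma congr_tri {p q : Fin 3 → Plane} (h : ∀ j k, dist (p j) (p k) = dist (q j) (q k))
    (hq : IsTriangle q) : IsTriangle p ∧ ∀ i, triAngle p i = triAngle q i := by
  refine ⟨?_, fun i => angle_of_dist _ _ _ _ _ _ (h _ _) (h _ _) (h _ _)⟩
  rw [isTri_iff] at hq ⊢
  rw [angle_of_dist _ _ _ _ _ _ (h 0 1) (h 2 1) (h 0 2)]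
  refine ⟨?_, ?_, hq.2.2⟩
  · rw [← dist_pos, h, dist_pos]; exact hq.1
  · rw [← dist_pos, h, dist_pos]; exact hq.2.1

lemma tri_perm {T : Fin 3 → Plane} (hT : IsTriangle T) (σ : Equiv.Perm (Fin 3)) :
    IsTriangle (T ∘ σ) := by
  unfold IsTriangle at *
  rwa [σ.surjective.range_comp]

def rect (T : Fin 3 → Plane) : Fin 4 → Plane := ![T 0, T 1, T 2, T 1 + T 2 - T 0]

lemma rect_dist (T : Fin 3 → Plane) (h : triAngle T 0 = Real.pi / 2) (a : Fin 4) :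
    ∃ τ : Equiv.Perm (Fin 3), ∀ j k, dist (rect T (a.succAbove j)) (rect T (a.succAbove k))
      = dist (T (τ j)) (T (τ k)) := by
  set D := T 1 + T 2 - T 0 with hD
  have h1 : dist D (T 1) = dist (T 2) (T 0) := by
    rw [dist_eq_norm, dist_eq_norm]; congr 1; rw [hD]; abel
  have h2 : dist D (T 2) = dist (T 1) (T 0) := by
    rw [dist_eq_norm, dist_eq_norm]; congr 1; rw [hD]; abel
  have h3 : dist D (T 0) = dist (T 2) (T 1) := by
    have h0 : inner ℝ (T 1 - T 0) (T 2 - T 0) = 0 := by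
      have := InnerProductGeometry.inner_eq_zero_iff_angle_eq_pi_div_two (T 1 - T 0) (T 2 - T 0)
      rw [this]; exact h
    rw [dist_eq_norm, dist_eq_norm]
    have e1 : D - T 0 = (T 2 - T 0) + (T 1 - T 0) := by rw [hD]; abel
    have e2 : T 2 - T 1 = (T 2 - T 0) - (T 1 - T 0) := by abel
    rw [e1, e2]
    have := norm_add_sq_real (T 2 - T 0) (T 1 - T 0)
    have h' := norm_sub_sq_real (T 2 - T 0) (T 1 - T 0)
    rw [real_inner_comm] at h0
    rw [h0] at this h'
    refine (sq_eq_sq₀ (norm_nonneg _) (norm_nonneg _)).1 ?_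
    rw [this, h']; ring
  have h1' := h1; rw [dist_comm] at h1'
  have h2' := h2; rw [dist_comm] at h2'
  have h3' := h3; rw [dist_comm] at h3'
  have c1 := dist_comm (T 1) (T 0)
  have c2 := dist_comm (T 2) (T 0)
  have c3 := dist_comm (T 2) (T 1)
  have r0 : rect T 0 = T 0 := rfl
  have r1 : rect T 1 = T 1 := rfl
  have r2 : rect T 2 = T 2 := rfl
  have r3 : rect T 3 = D := rfl
  have key : ∀ (b : Fin 3 → Fin 4) (τ : Equiv.Perm (Fin 3)),
      dist (rect T (b 0)) (rect T (b 1)) = dist (T (τ 0)) (T (τ 1)) →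
      dist (rect T (b 0)) (rect T (b 2)) = dist (T (τ 0)) (T (τ 2)) →
      dist (rect T (b 1)) (rect T (b 2)) = dist (T (τ 1)) (T (τ 2)) →
      ∀ j k, dist (rect T (b j)) (rect T (b k)) = dist (T (τ j)) (T (τ k)) := by
    intro b τ k1 k2 k3 j k
    have k1' := k1; rw [dist_comm, dist_comm (T _)] at k1'
    have k2' := k2; rw [dist_comm, dist_comm (T _)] at k2'
    have k3' := k3; rw [dist_comm, dist_comm (T _)] at k3'
    fin_cases j <;> fin_cases k <;> simp <;> assumption
  have main : ∀ (b : Fin 3 → Fin 4) (x y z : Fin 4) (τ : Equiv.Perm (Fin 3)) (x' y' z' : Fin 3),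
      b 0 = x → b 1 = y → b 2 = z → τ 0 = x' → τ 1 = y' → τ 2 = z' →
      dist (rect T x) (rect T y) = dist (T x') (T y') →
      dist (rect T x) (rect T z) = dist (T x') (T z') →
      dist (rect T y) (rect T z) = dist (T y') (T z') →
      ∀ j k, dist (rect T (b j)) (rect T (b k)) = dist (T (τ j)) (T (τ k)) := by
    rintro b _ _ _ τ _ _ _ rfl rfl rfl rfl rfl rfl
    exact key b τ
  fin_cases a
  · refine ⟨Equiv.swap 0 2, main _ 1 2 3 _ 2 1 0 (by decide) (by decide) (by decide)
      (by decide) (by decide) (by decide) ?_ ?_ ?_⟩ <;> simp only [r0, r1, r2, r3] <;> grind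
  · refine ⟨Equiv.swap 1 2 * Equiv.swap 0 1, main _ 0 2 3 _ 2 0 1 (by decide) (by decide)
      (by decide) (by decide) (by decide) (by decide) ?_ ?_ ?_⟩ <;>
      simp only [r0, r1, r2, r3] <;> grind
  · refine ⟨Equiv.swap 0 1, main _ 0 1 3 _ 1 0 2 (by decide) (by decide) (by decide)
      (by decide) (by decide) (by decide) ?_ ?_ ?_⟩ <;> simp only [r0, r1, r2, r3] <;> grind
  · exact ⟨1, main _ 0 1 2 _ 0 1 2 (by decide) (by decide) (by decide)
      (by decide) (by decide) (by decide) rfl rfl rfl⟩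

lemma perturb (t x : Fin 3 → Plane) (ht : IsTriangle t) (ε : ℝ) (hε : 0 < ε) :
    ∀ᶠ δ : ℝ in nhds 0, IsTriangle (fun i => t i + δ • x i) ∧
      ∀ i, |triAngle (fun i => t i + δ • x i) i - triAngle t i| < ε := by
  have inj := isTri_inj ht
  have hc : ∀ i j k : Fin 3, i ≠ j → k ≠ j → Filter.Tendsto
      (fun δ : ℝ => ∠ (t i + δ • x i) (t j + δ • x j) (t k + δ • x k)) (nhds 0)
      (nhds (∠ (t i) (t j) (t k))) := by
    intro i j k hij hkj
    have h1 := EuclideanGeometry.continuousAt_angle (x := (t i, t j, t k))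
      (inj.ne hij) (inj.ne hkj)
    have h2 : Filter.Tendsto (fun δ : ℝ => (t i + δ • x i, t j + δ • x j, t k + δ • x k))
        (nhds 0) (nhds (t i, t j, t k)) := by
      have : Continuous (fun δ : ℝ => (t i + δ • x i, t j + δ • x j, t k + δ • x k)) := by
        fun_prop
      simpa using this.tendsto 0
    have h3 : Filter.Tendsto (fun y : Plane × Plane × Plane => ∠ y.1 y.2.1 y.2.2)
        (nhds (t i, t j, t k)) (nhds (∠ (t i) (t j) (t k))) := h1
    have h4 := Filter.Tendsto.comp h3 h2
    simpa only [Function.comp_def] using h4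
  have hp : ∀ i, Filter.Tendsto (fun δ : ℝ => t i + δ • x i) (nhds 0) (nhds (t i)) := by
    intro i
    have : Continuous (fun δ : ℝ => t i + δ • x i) := by fun_prop
    simpa using this.tendsto 0
  refine Filter.Eventually.and ?_ ?_
  · have h := (isTri_iff t).1 ht
    simp only [isTri_iff]
    refine .and ?_ (.and ?_ (.and ?_ ?_))
    · have := ((hp 0).sub (hp 1)).eventually_ne (sub_ne_zero.2 h.1)
      filter_upwards [this] with δ h
      exact sub_ne_zero.1 h
    · have := ((hp 2).sub (hp 1)).eventually_ne (sub_ne_zero.2 h.2.1)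
      filter_upwards [this] with δ h
      exact sub_ne_zero.1 h
    · exact (hc 0 1 2 (by decide) (by decide)).eventually_ne h.2.2.1
    · exact (hc 0 1 2 (by decide) (by decide)).eventually_ne h.2.2.2
  · rw [Filter.eventually_all]
    intro i
    have := hc (i+1) i (i+2) (by revert i; decide) (by revert i; decide)
    have := (Metric.tendsto_nhds.1 this) ε hε
    simpa only [Real.dist_eq, triAngle] using this

lemma homothety_forms {ε : ℝ} {T : Fin 3 → Plane} {S : Finset Plane} (hS : FormsSimilar ε T S)
    (v : Plane) (δ : ℝ) (hδ : δ ≠ 0) :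
    FormsSimilar ε T (S.image (fun x => v + δ • x)) := by
  obtain ⟨p, h1, h2, σ, h3⟩ := hS
  have ha : ∀ a b c : Plane, ∠ (v + δ • a) (v + δ • b) (v + δ • c) = ∠ a b c := by
    intro a b c
    unfold EuclideanGeometry.angle
    simp only [vsub_eq_sub, add_sub_add_left_eq_sub, ← smul_sub]
    exact InnerProductGeometry.angle_smul_smul hδ _ _
  refine ⟨fun i => v + δ • p i, ?_, ?_, σ, ?_⟩
  · rw [Finset.coe_image, h1, ← Set.range_comp]; rfl
  · rw [isTri_iff] at h2 ⊢
    simp only [ha]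
    simpa [hδ] using h2
  · intro i
    simpa only [triAngle, ha] using h3 i

lemma simFin (ε : ℝ) (T : Fin 3 → Plane) (P : Finset Plane) :
    {S : Finset Plane | S ⊆ P ∧ S.card = 3 ∧ FormsSimilar ε T S}.Finite :=
  (P.powerset.finite_toSet).subset (fun S hS => by simpa using hS.1)

lemma simCount_mono (ε : ℝ) (T : Fin 3 → Plane) {P Q : Finset Plane} (h : P ⊆ Q) :
    simCount ε T P ≤ simCount ε T Q :=
  Set.ncard_le_ncard (fun _ hS => ⟨hS.1.trans h, hS.2⟩) (simFin ε T Q)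

lemma le_hGeo (ε : ℝ) (T : Fin 3 → Plane) (P : Finset Plane) :
    simCount ε T P ≤ hGeo P.card T ε := by
  refine le_csSup ⟨2 ^ P.card, ?_⟩ ⟨P, rfl, rfl⟩
  rintro m ⟨Q, hQ, rfl⟩
  rw [← hQ, ← Finset.card_powerset, ← Set.ncard_coe_finset]
  exact Set.ncard_le_ncard (fun S hS => by simpa using hS.1) (Finset.finite_toSet _)

lemma exists_v (T : Fin 3 → Plane) (hT : IsTriangle T)
    (hright : ∃ i : Fin 3, triAngle T i = Real.pi / 2) :
    ∃ v : Fin 4 → Plane, ∀ a : Fin 4, IsTriangle (v ∘ a.succAbove) ∧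
      ∃ τ : Equiv.Perm (Fin 3), ∀ i, triAngle (v ∘ a.succAbove) i = triAngle T (τ i) := by
  obtain ⟨i, hi⟩ := hright
  let σ : Equiv.Perm (Fin 3) := Equiv.addLeft i
  have h0 : triAngle (T ∘ σ) 0 = Real.pi / 2 := by
    rw [triAngle_perm]; simpa [σ] using hi
  refine ⟨rect (T ∘ σ), fun a => ?_⟩
  obtain ⟨τ, hτ⟩ := rect_dist _ h0 a
  have := congr_tri (p := rect (T ∘ σ) ∘ a.succAbove) (q := (T ∘ σ) ∘ τ) hτ
    (tri_perm (tri_perm hT σ) τ)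
  refine ⟨this.1, τ.trans σ, fun j => ?_⟩
  rw [this.2, triAngle_perm, triAngle_perm]; rfl

lemma exists_delta (T : Fin 3 → Plane) (ε : ℝ) (hε : 0 < ε) (v : Fin 4 → Plane)
    (hv : ∀ a : Fin 4, IsTriangle (v ∘ a.succAbove) ∧
      ∃ τ : Equiv.Perm (Fin 3), ∀ i, triAngle (v ∘ a.succAbove) i = triAngle T (τ i))
    (P : Finset Plane) :
    ∃ δ : ℝ, δ ≠ 0 ∧ ∀ (a : Fin 4) (x : Fin 3 → P),
      IsTriangle (fun i => v (a.succAbove i) + δ • (x i : Plane)) ∧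
      EpsSimilar ε (fun i => v (a.succAbove i) + δ • (x i : Plane)) T := by
  have h : ∀ᶠ δ : ℝ in nhds 0, ∀ (a : Fin 4) (x : Fin 3 → P),
      IsTriangle (fun i => v (a.succAbove i) + δ • (x i : Plane)) ∧
      EpsSimilar ε (fun i => v (a.succAbove i) + δ • (x i : Plane)) T := by
    rw [Filter.eventually_all]; intro a
    rw [Filter.eventually_all]; intro x
    obtain ⟨h1, τ, h2⟩ := hv a
    filter_upwards [perturb _ (fun i => (x i : Plane)) h1 ε hε] with δ hδ
    refine ⟨hδ.1, τ, fun i => ?_⟩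
    rw [← h2]; exact hδ.2 i
  have h' := (h.filter_mono (nhdsWithin_le_nhds (s := {0}ᶜ))).and self_mem_nhdsWithin
  obtain ⟨δ, h1, h2⟩ := h'.exists
  exact ⟨δ, h2, h1⟩

lemma step (T : Fin 3 → Plane) (hT : IsTriangle T)
    (hright : ∃ i : Fin 3, triAngle T i = Real.pi / 2) (ε : ℝ) (hε : 0 < ε) (P : Finset Plane) :
    ∃ Q : Finset Plane, Q.card = 4 * P.card ∧
      4 * P.card ^ 3 + 4 * simCount ε T P ≤ simCount ε T Q := by
  classical
  obtain ⟨v, hv⟩ := exists_v T hT hright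
  obtain ⟨δ, hδ, H⟩ := exists_delta T ε hε v hv P
  let φ : Fin 4 × P → Plane := fun y => v y.1 + δ • (y.2 : Plane)
  have hφ : Function.Injective φ := by
    rintro ⟨a, x⟩ ⟨b, y⟩ hxy
    by_cases hab : a = b
    · subst hab
      have : (x : Plane) = y := by simpa [φ, hδ] using hxy
      rw [Subtype.ext this]
    · exfalso
      have : ∀ a b : Fin 4, a ≠ b → ∃ (c : Fin 4) (i j : Fin 3), i ≠ j ∧ c.succAbove i = a ∧
          c.succAbove j = b := by decide
      obtain ⟨c, i, j, hij, rfl, rfl⟩ := this a b hab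
      have h1 := isTri_inj (H c (fun k => if k = i then x else y)).1
      apply hij
      apply h1
      simpa [hij.symm, φ] using hxy
  let 𝒮 := {S : Finset Plane | S ⊆ P ∧ S.card = 3 ∧ FormsSimilar ε T S}
  have : Finite 𝒮 := simFin ε T P
  let G : (Fin 4 × (Fin 3 → P)) ⊕ (Fin 4 × 𝒮) → Finset (Fin 4 × P) := fun z =>
    match z with
    | .inl (a, x) => Finset.univ.image (fun i => (a.succAbove i, x i))
    | .inr (a, S) => Finset.univ.filter (fun y => y.1 = a ∧ (y.2 : Plane) ∈ S.1)
  have mem1 : ∀ a x y, y ∈ G (.inl (a, x)) ↔ ∃ i, (a.succAbove i, x i) = y := by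
    intro a x y; simp [G]
  have mem2 : ∀ a S y, y ∈ G (.inr (a, S)) ↔ y.1 = a ∧ (y.2 : Plane) ∈ S.1 := by
    intro a S y; simp [G]
  have hne : ∀ S : 𝒮, ∃ x : P, (x : Plane) ∈ S.1 := by
    intro S
    obtain ⟨x, hx⟩ := Finset.card_pos.1 (by rw [S.2.2.1]; norm_num : 0 < S.1.card)
    exact ⟨⟨x, S.2.1 hx⟩, hx⟩
  have hmix : ∀ a x b S, G (.inl (a, x)) ≠ G (.inr (b, S)) := by
    intro a x b S h
    have h0 := (mem2 b S _).1 (h ▸ (mem1 a x _).2 ⟨0, rfl⟩)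
    have h1 := (mem2 b S _).1 (h ▸ (mem1 a x _).2 ⟨1, rfl⟩)
    have := a.succAbove_right_injective (h0.1.trans h1.1.symm)
    exact absurd this (by decide)
  have hG : Function.Injective G := by
    rintro (⟨a, x⟩ | ⟨a, S⟩) (⟨b, y⟩ | ⟨b, S'⟩) h
    · have hab : a = b := by
        by_contra hab
        obtain ⟨i, hi⟩ := Fin.exists_succAbove_eq (Ne.symm hab)
        have := (mem1 a x _).2 ⟨i, rfl⟩
        rw [h, mem1] at this
        obtain ⟨j, hj⟩ := this
        have := congrArg Prod.fst hj
        simp only [hi] at this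
        exact Fin.succAbove_ne b j this
      subst hab
      have hxy : x = y := by
        funext i
        have := (mem1 a x _).2 ⟨i, rfl⟩
        rw [h, mem1] at this
        obtain ⟨j, hj⟩ := this
        rw [Prod.mk.injEq] at hj
        have hji := a.succAbove_right_injective hj.1
        rw [← hj.2, hji]
      rw [hxy]
    · exact absurd h (hmix _ _ _ _)
    · exact absurd h.symm (hmix _ _ _ _)
    · obtain ⟨x, hx⟩ := hne S
      have hab : a = b := by
        have := (mem2 a S (a, x)).2 ⟨rfl, hx⟩
        rw [h, mem2] at this
        exact this.1
      subst hab
      have hS : S = S' := by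
        apply Subtype.ext
        ext z
        constructor
        · intro hz
          have := (mem2 a S (a, ⟨z, S.2.1 hz⟩)).2 ⟨rfl, hz⟩
          rw [h, mem2] at this
          exact this.2
        · intro hz
          have := (mem2 a S' (a, ⟨z, S'.2.1 hz⟩)).2 ⟨rfl, hz⟩
          rw [← h, mem2] at this
          exact this.2
      rw [hS]
  refine ⟨Finset.univ.map ⟨φ, hφ⟩, by simp, ?_⟩
  have hcard : Nat.card ((Fin 4 × (Fin 3 → P)) ⊕ (Fin 4 × 𝒮)) =
      4 * P.card ^ 3 + 4 * simCount ε T P := by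
    rw [Nat.card_sum, Nat.card_prod, Nat.card_prod]
    simp [simCount, 𝒮, Set.ncard]
  rw [← hcard]
  let K := fun z => (G z).map ⟨φ, hφ⟩
  have hK : Function.Injective K := (Finset.map_injective _).comp hG
  rw [← Set.ncard_univ, ← Set.ncard_image_of_injective _ hK]
  refine Set.ncard_le_ncard ?_ (simFin ε T _)
  rintro _ ⟨z, -, rfl⟩
  refine ⟨Finset.map_subset_map.2 (Finset.subset_univ _), ?_⟩
  rcases z with ⟨a, x⟩ | ⟨a, S⟩
  · constructor
    · simp only [K, Finset.card_map, G]
      rw [Finset.card_image_of_injective]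
      · simp
      · intro i j hij
        exact a.succAbove_right_injective (congrArg Prod.fst hij)
    · refine ⟨_, ?_, H a x⟩
      ext z
      simp [K, G, φ]
  · have : K (.inr (a, S)) = S.1.image (fun x => v a + δ • x) := by
      ext z
      simp only [K, Finset.mem_map, mem2, Finset.mem_image, Function.Embedding.coeFn_mk]
      constructor
      · rintro ⟨y, ⟨rfl, h2⟩, rfl⟩
        exact ⟨_, h2, rfl⟩
      · rintro ⟨y, hy, rfl⟩
        exact ⟨(a, ⟨y, S.2.1 hy⟩), ⟨rfl, hy⟩, rfl⟩
    rw [this]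
    refine ⟨?_, homothety_forms S.2.2.2 _ _ hδ⟩
    rw [Finset.card_image_of_injective _ ?_, S.2.2.1]
    intro x y hxy
    simpa [hδ] using hxy

lemma main_ind (T : Fin 3 → Plane) (hT : IsTriangle T)
    (hright : ∃ i : Fin 3, triAngle T i = Real.pi / 2) (ε : ℝ) (hε : 0 < ε) (n : ℕ) :
    ∃ P : Finset Plane, P.card = n ∧
      (n : ℝ) ^ 3 / 15 - (n : ℝ) ^ 2 ≤ (simCount ε T P : ℝ) := by
  induction n using Nat.strong_induction_on with
  | _ n ih =>
    rcases lt_or_ge n 4 with hn | hn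
    · obtain ⟨P, hP⟩ := Infinite.exists_subset_card_eq Plane n
      refine ⟨P, hP, le_trans ?_ (Nat.cast_nonneg _)⟩
      interval_cases n <;> norm_num
    · obtain ⟨P, hP, hb⟩ := ih (n / 4) (by omega)
      obtain ⟨Q, hQ, hq⟩ := step T hT hright ε hε P
      obtain ⟨R, hR, hr⟩ := Infinite.exists_superset_card_eq Q n (by omega)
      refine ⟨R, hr, ?_⟩
      have h1 : 4 * P.card ^ 3 + 4 * simCount ε T P ≤ simCount ε T R :=
        hq.trans (simCount_mono ε T hR)
      have h2 : 4 * (P.card : ℝ) ^ 3 + 4 * (simCount ε T P : ℝ) ≤ (simCount ε T R : ℝ) := by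
        exact_mod_cast h1
      rw [hP] at h2
      have hm : n = 4 * (n / 4) + n % 4 := by omega
      have hr4 : n % 4 ≤ 3 := by omega
      generalize n / 4 = m at *
      generalize n % 4 = r at *
      subst hm
      refine le_trans ?_ h2
      have hm0 : (0 : ℝ) ≤ m := Nat.cast_nonneg _
      push_cast
      interval_cases r <;> norm_num <;> nlinarith

/-- For every right-angled non-degenerate triangle `T` and every `ε > 0` there is
`C > 0` with `h(n, T, ε) ≥ n³/15 - C·n²` for every `n`. -/
theorem stmt_8 (T : Fin 3 → Plane) (hT : IsTriangle T)
    (hright : ∃ i : Fin 3, triAngle T i = Real.pi / 2) (ε : ℝ) (hε : 0 < ε) :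
    ∃ C : ℝ, 0 < C ∧ ∀ n : ℕ,
      (n : ℝ) ^ 3 / 15 - C * (n : ℝ) ^ 2 ≤ (hGeo n T ε : ℝ) := by
  refine ⟨1, one_pos, fun n => ?_⟩
  obtain ⟨P, rfl, h⟩ := main_ind T hT hright ε hε n
  rw [one_mul]
  exact h.trans (by exact_mod_cast le_hGeo ε T P)

end
end

section
/- For almost every pair (α, β) (with respect to Lebesgue measure on the set {(α, β) ∈ ℝ² : α > 0, β > 0, α + β < π}), the triangle T with angles α, β and π − α − β has the following property: there exists ε > 0 such that limsup_{n→∞} h(n, T, ε)/C(n, 3) ≤ 0.25108. -/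
open EuclideanGeometry

noncomputable section

theorem ts_ineq {k : Type*} [AddCommGroup k] [DecidableEq k] (h3 : ∀ u : k, u + u + u = 0)
    (S : Finset k) (a : k → ℝ) (ha : ∀ u, 0 ≤ a u) (h0 : ∀ u, u ∉ S → a u = 0) :
    4 * ∑ p ∈ S.offDiag, a p.1 * a p.2 * a (-p.1 - p.2) + ∑ u ∈ S, a u ^ 3
      ≤ (∑ u ∈ S, a u) ^ 3 := by
  classical
  set n := ∑ u ∈ S, a u with hn
  have hsplit : ∀ F : k × k → ℝ, ∑ u ∈ S, ∑ v ∈ S, F (u, v)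
      = ∑ u ∈ S, F (u, u) + ∑ p ∈ S.offDiag, F p := by
    intro F
    rw [← Finset.sum_product', ← Finset.diag_union_offDiag,
      Finset.sum_union (Finset.disjoint_diag_offDiag S), Finset.sum_diag]
  have e1 : n ^ 2 = ∑ u ∈ S, a u ^ 2 + ∑ p ∈ S.offDiag, a p.1 * a p.2 := by
    have := hsplit (fun p => a p.1 * a p.2)
    simp only [← Finset.mul_sum, ← Finset.sum_mul, ← hn] at this
    rw [sq, this]
    simp [sq]
  have e2 : n * ∑ u ∈ S, a u ^ 2 = ∑ u ∈ S, a u ^ 3 + ∑ p ∈ S.offDiag, a p.1 ^ 2 * a p.2 := by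
    have := hsplit (fun p => a p.1 ^ 2 * a p.2)
    simp only [← Finset.mul_sum, ← Finset.sum_mul, ← hn] at this
    rw [mul_comm, this]
    congr 1
  have e3 : ∑ p ∈ S.offDiag, a p.2 ^ 2 * a p.1 = ∑ p ∈ S.offDiag, a p.1 ^ 2 * a p.2 := by
    refine Finset.sum_nbij' Prod.swap Prod.swap ?_ ?_ ?_ ?_ ?_ <;>
      simp +contextual [Finset.mem_offDiag, eq_comm]
  have hw : ∀ u v : k, u ≠ v → (-u - v ≠ u ∧ -u - v ≠ v) := by
    intro u v huv
    constructor
    · intro h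
      apply huv
      have h1 : u + u + v = 0 := by rw [← h]; nth_rewrite 1 [h]; abel
      have h2 := h3 u
      exact (add_left_cancel (h1.trans h2.symm)).symm
    · intro h
      apply huv
      have h1 : v + v + u = 0 := by rw [← h]; nth_rewrite 1 [h]; abel
      have h2 := h3 v
      exact (add_left_cancel (h1.trans h2.symm))
  have e4 : ∑ p ∈ S.offDiag, a p.1 * a p.2 * a (-p.1 - p.2)
      ≤ ∑ p ∈ S.offDiag, a p.1 * a p.2 * (n - a p.1 - a p.2) := by
    refine Finset.sum_le_sum fun p hp => ?_
    rw [Finset.mem_offDiag] at hp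
    refine mul_le_mul_of_nonneg_left ?_ (mul_nonneg (ha _) (ha _))
    obtain ⟨w1, w2⟩ := hw p.1 p.2 hp.2.2
    by_cases hm : (-p.1 - p.2) ∈ S
    · have hsub : ({p.1, p.2, -p.1 - p.2} : Finset k) ⊆ S := by
        intro t ht
        simp only [Finset.mem_insert, Finset.mem_singleton] at ht
        rcases ht with rfl | rfl | rfl
        exacts [hp.1, hp.2.1, hm]
      have := Finset.sum_le_sum_of_subset_of_nonneg hsub (fun i _ _ => ha i)
      rw [Finset.sum_insert (by simp [hp.2.2, w1.symm]), Finset.sum_pair w2.symm] at this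
      linarith
    · rw [h0 _ hm]
      have hsub : ({p.1, p.2} : Finset k) ⊆ S := by
        intro t ht
        simp only [Finset.mem_insert, Finset.mem_singleton] at ht
        rcases ht with rfl | rfl
        exacts [hp.1, hp.2.1]
      have := Finset.sum_le_sum_of_subset_of_nonneg hsub (fun i _ _ => ha i)
      rw [Finset.sum_pair hp.2.2] at this
      linarith
  -- rotation
  have hrot : ∀ g : k × k → k × k, Function.Injective g →
      (∀ p ∈ S.offDiag, -p.1 - p.2 ∈ S → g p ∈ S.offDiag) →
      (∀ p : k × k, -p.1 - p.2 ∉ S → a (g p).1 ^ 2 * a (g p).2 = 0) →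
      ∑ p ∈ S.offDiag, a (g p).1 ^ 2 * a (g p).2 ≤ ∑ p ∈ S.offDiag, a p.1 ^ 2 * a p.2 := by
    intro g hg h1 h2
    have : ∑ p ∈ S.offDiag, a (g p).1 ^ 2 * a (g p).2
        = ∑ p ∈ S.offDiag.filter (fun p => -p.1 - p.2 ∈ S), a (g p).1 ^ 2 * a (g p).2 := by
      rw [Finset.sum_filter]
      refine Finset.sum_congr rfl fun p hp => ?_
      split_ifs with h
      · rfl
      · exact h2 p h
    rw [this, ← Finset.sum_image (f := fun p : k × k => a p.1 ^ 2 * a p.2) (g := g) hg.injOn]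
    refine Finset.sum_le_sum_of_subset_of_nonneg ?_
      (fun i _ _ => mul_nonneg (sq_nonneg _) (ha _))
    intro q hq
    rw [Finset.mem_image] at hq
    obtain ⟨p, hp, rfl⟩ := hq
    rw [Finset.mem_filter] at hp
    exact h1 p hp.1 hp.2
  have r1 := hrot (fun p => (p.2, -p.1 - p.2))
    (by
      rintro ⟨u, v⟩ ⟨u', v'⟩ h
      simp only [Prod.mk.injEq] at h
      obtain ⟨rfl, h⟩ := h
      simpa using h)
    (by
      intro p hp hm
      rw [Finset.mem_offDiag] at hp ⊢
      exact ⟨hp.2.1, hm, (hw _ _ hp.2.2).2.symm⟩)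
    (by
      intro p hm
      simp [h0 _ hm])
  have r2 := hrot (fun p => (-p.1 - p.2, p.1))
    (by
      rintro ⟨u, v⟩ ⟨u', v'⟩ h
      simp only [Prod.mk.injEq] at h
      obtain ⟨h, rfl⟩ := h
      simpa using h)
    (by
      intro p hp hm
      rw [Finset.mem_offDiag] at hp ⊢
      exact ⟨hm, hp.1, (hw _ _ hp.2.2).1⟩)
    (by
      intro p hm
      simp [h0 _ hm])
  have amgm : ∀ x y z : ℝ, 0 ≤ x → 0 ≤ y → 0 ≤ z →
      3 * (x * y * z) ≤ x ^ 2 * y + y ^ 2 * z + z ^ 2 * x := by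
    have key : ∀ x y z : ℝ, 0 ≤ x → x ≤ y → x ≤ z →
        3 * (x * y * z) ≤ x ^ 2 * y + y ^ 2 * z + z ^ 2 * x := by
      intro x y z hx h1 h2
      have i1 : 0 ≤ x * ((y - x) ^ 2 - (y - x) * (z - x) + (z - x) ^ 2) :=
        mul_nonneg hx (by
          nlinarith [sq_nonneg ((y - x) - (z - x)), sq_nonneg (y - x), sq_nonneg (z - x)])
      have i2 : 0 ≤ (y - x) ^ 2 * (z - x) := mul_nonneg (sq_nonneg _) (sub_nonneg.2 h2)
      linarith
    intro x y z hx hy hz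
    rcases le_total x y with h1 | h1
    · rcases le_total x z with h2 | h2
      · exact key x y z hx h1 h2
      · linarith [key z x y hz h2 (h2.trans h1)]
    · rcases le_total y z with h2 | h2
      · linarith [key y z x hy h2 h1]
      · linarith [key z x y hz (h2.trans h1) h2]
  have e5 : 3 * ∑ p ∈ S.offDiag, a p.1 * a p.2 * a (-p.1 - p.2)
      ≤ 3 * ∑ p ∈ S.offDiag, a p.1 ^ 2 * a p.2 := by
    have : 3 * ∑ p ∈ S.offDiag, a p.1 * a p.2 * a (-p.1 - p.2) ≤
        ∑ p ∈ S.offDiag, (a p.1 ^ 2 * a p.2 + a p.2 ^ 2 * a (-p.1 - p.2)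
          + a (-p.1 - p.2) ^ 2 * a p.1) := by
      rw [Finset.mul_sum]
      exact Finset.sum_le_sum fun p _ => amgm _ _ _ (ha _) (ha _) (ha _)
    rw [Finset.sum_add_distrib, Finset.sum_add_distrib] at this
    linarith
  have e6 : n * ∑ p ∈ S.offDiag, a p.1 * a p.2 =
      ∑ p ∈ S.offDiag, a p.1 * a p.2 * (n - a p.1 - a p.2)
      + ∑ p ∈ S.offDiag, a p.1 ^ 2 * a p.2 + ∑ p ∈ S.offDiag, a p.2 ^ 2 * a p.1 := by
    rw [Finset.mul_sum, ← Finset.sum_add_distrib, ← Finset.sum_add_distrib]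
    exact Finset.sum_congr rfl fun p _ => by ring
  have e7 : n ^ 3 = n * ∑ u ∈ S, a u ^ 2 + n * ∑ p ∈ S.offDiag, a p.1 * a p.2 := by
    rw [← mul_add, ← e1]; ring
  linarith

open Classical in
theorem six_card {ι : Type*} (x y z : ι) (hxy : x ≠ y) (hxz : x ≠ z) (hyz : y ≠ z) :
    ({(x, y, z), (x, z, y), (y, x, z), (y, z, x), (z, x, y), (z, y, x)} :
          Finset (ι × ι × ι)).card = 6 := by
  simp [Finset.card_insert_of_notMem, hxy, hxz, hyz, hxy.symm, hxz.symm, hyz.symm]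

open Classical in
theorem edge_bound {ι k : Type*} [AddCommGroup k] (h3 : ∀ u : k, u + u + u = 0)
    (E : Finset ι → Prop) (N : ℕ)
    (hcol : ∀ Q : Finset ι, 2 ≤ Q.card → Q.card ≤ N → ∃ c : ι → k,
      (∃ i ∈ Q, ∃ j ∈ Q, c i ≠ c j) ∧
      ∀ S ⊆ Q, S.card = 3 → E S → ∑ i ∈ S, c i = 0) :
    ∀ n : ℕ, ∀ Q : Finset ι, Q.card = n → n ≤ N →
      24 * (((Q.powersetCard 3).filter E).card : ℝ) + n ≤ (n : ℝ) ^ 3 := by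
  intro n
  induction n using Nat.strong_induction_on with
  | _ n ih =>
  intro Q hQ hN
  by_cases h2 : n < 2
  · have : Q.powersetCard 3 = ∅ := Finset.powersetCard_eq_empty.2 (by omega)
    rw [this]
    interval_cases n <;> simp
  push Not at h2
  obtain ⟨c, ⟨i0, hi0, j0, hj0, hij⟩, hc⟩ := hcol Q (by omega) (by omega)
  let A : k → Finset ι := fun u => Q.filter (fun i => c i = u)
  let S : Finset k := Q.image c
  have hAlt : ∀ u, (A u).card < n := by
    intro u
    rw [← hQ]
    apply Finset.card_lt_card
    rw [Finset.filter_ssubset]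
    by_cases h : c i0 = u
    · exact ⟨j0, hj0, fun h' => hij (h.trans h'.symm)⟩
    · exact ⟨i0, hi0, h⟩
  have hsum : ∑ u ∈ S, ((A u).card : ℝ) = n := by
    rw [← hQ, Finset.card_eq_sum_card_image c Q]
    push_cast
    rfl
  let M := S.biUnion (fun u => ((A u).powersetCard 3).filter E)
  obtain ⟨rb, hrb⟩ : ∃ rb : Finset ι → Prop,
      ∀ s, rb s ↔ ∀ x ∈ s, ∀ y ∈ s, x ≠ y → c x ≠ c y := ⟨_, fun s => Iff.rfl⟩
  let R := ((Q.powersetCard 3).filter E).filter rb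
  have hsub : (Q.powersetCard 3).filter E ⊆ M ∪ R := by
    intro s hs
    rw [Finset.mem_union]
    by_cases hr : ∀ x ∈ s, ∀ y ∈ s, x ≠ y → c x ≠ c y
    · right
      exact Finset.mem_filter.2 ⟨hs, (hrb s).2 hr⟩
    · left
      push Not at hr
      obtain ⟨x, hx, y, hy, hxy, hcxy⟩ := hr
      rw [Finset.mem_filter, Finset.mem_powersetCard] at hs
      have hz := hc s hs.1.1 hs.1.2 hs.2
      refine Finset.mem_biUnion.2 ⟨c x, Finset.mem_image_of_mem _ (hs.1.1 hx), ?_⟩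
      rw [Finset.mem_filter, Finset.mem_powersetCard]
      refine ⟨⟨?_, hs.1.2⟩, hs.2⟩
      intro t ht
      rw [Finset.mem_filter]
      refine ⟨hs.1.1 ht, ?_⟩
      by_cases htx : t = x
      · rw [htx]
      by_cases hty : t = y
      · rw [hty, hcxy]
      have hset : ({x, y, t} : Finset ι) = s := by
        apply Finset.eq_of_subset_of_card_le
        · intro a ha
          simp only [Finset.mem_insert, Finset.mem_singleton] at ha
          rcases ha with rfl | rfl | rfl <;> assumption
        · rw [hs.1.2, Finset.card_eq_three.2 ⟨x, y, t, hxy, Ne.symm htx, Ne.symm hty, rfl⟩]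
      rw [← hset, Finset.sum_insert (by simp [hxy, Ne.symm htx]),
        Finset.sum_pair (Ne.symm hty), ← hcxy, ← add_assoc] at hz
      exact add_left_cancel (hz.trans (h3 (c x)).symm)
  have hM : 24 * (M.card : ℝ) + n ≤ ∑ u ∈ S, ((A u).card : ℝ) ^ 3 := by
    have h1 : (M.card : ℝ) ≤ ∑ u ∈ S, ((((A u).powersetCard 3).filter E).card : ℝ) := by
      exact_mod_cast Finset.card_biUnion_le
    have h2 : ∑ u ∈ S, (24 * ((((A u).powersetCard 3).filter E).card : ℝ) + (A u).card)
        ≤ ∑ u ∈ S, ((A u).card : ℝ) ^ 3 :=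
      Finset.sum_le_sum fun u _ => ih _ (hAlt u) (A u) rfl ((hAlt u).le.trans hN)
    rw [Finset.sum_add_distrib, hsum, ← Finset.mul_sum] at h2
    linarith
  let P := S.offDiag.biUnion (fun p => A p.1 ×ˢ A p.2 ×ˢ A (-p.1 - p.2))
  have hP : (P.card : ℝ) ≤ ∑ p ∈ S.offDiag, ((A p.1).card : ℝ) * (A p.2).card *
      (A (-p.1 - p.2)).card := by
    have : P.card ≤ ∑ p ∈ S.offDiag, (A p.1 ×ˢ A p.2 ×ˢ A (-p.1 - p.2)).card :=
      Finset.card_biUnion_le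
    refine le_trans (Nat.cast_le.2 this) (le_of_eq ?_)
    push_cast [Finset.card_product]
    exact Finset.sum_congr rfl fun p _ => by ring
  have hR : 6 * R.card ≤ P.card := by
    have hfib : ∀ s ∈ R, 6 ≤ (P.filter (fun t => ({t.1, t.2.1, t.2.2} : Finset ι) = s)).card := by
      intro s hs
      rw [Finset.mem_filter, Finset.mem_filter, Finset.mem_powersetCard] at hs
      obtain ⟨⟨⟨hsQ, hs3⟩, hsE⟩, hsr⟩ := hs
      rw [hrb] at hsr
      have hz := hc s hsQ hs3 hsE
      obtain ⟨x, y, z, hxy, hxz, hyz, rfl⟩ := Finset.card_eq_three.1 hs3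
      have hx : x ∈ ({x, y, z} : Finset ι) := by simp
      have hy : y ∈ ({x, y, z} : Finset ι) := by simp
      have hzz : z ∈ ({x, y, z} : Finset ι) := by simp
      rw [Finset.sum_insert (by simp [hxy, hxz]), Finset.sum_pair hyz] at hz
      have key : ∀ a b d : ι, a ∈ Q → b ∈ Q → d ∈ Q → c a ≠ c b → c a + (c b + c d) = 0 →
          (a, b, d) ∈ P := by
        intro a b d ha hb hd hab h0
        refine Finset.mem_biUnion.2 ⟨(c a, c b), ?_, ?_⟩
        · exact Finset.mem_offDiag.2 ⟨Finset.mem_image_of_mem _ ha,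
            Finset.mem_image_of_mem _ hb, hab⟩
        · simp only [Finset.mem_product, A, Finset.mem_filter, ha, hb, hd, true_and]
          rw [← add_assoc] at h0
          rw [eq_neg_of_add_eq_zero_right h0]; abel
      have cxy := hsr x hx y hy hxy
      have cxz := hsr x hx z hzz hxz
      have cyz := hsr y hy z hzz hyz
      have qx := hsQ hx
      have qy := hsQ hy
      have qz := hsQ hzz
      have hcard : ({(x, y, z), (x, z, y), (y, x, z), (y, z, x), (z, x, y), (z, y, x)} :
          Finset (ι × ι × ι)).card = 6 := six_card x y z hxy hxz hyz
      rw [← hcard]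
      apply Finset.card_le_card
      intro t ht
      simp only [Finset.mem_insert, Finset.mem_singleton] at ht
      rw [Finset.mem_filter]
      rcases ht with rfl | rfl | rfl | rfl | rfl | rfl
      · exact ⟨key _ _ _ qx qy qz cxy hz, rfl⟩
      · exact ⟨key _ _ _ qx qz qy cxz (by rw [← hz]; abel), by rw [Finset.pair_comm z y]⟩
      · exact ⟨key _ _ _ qy qx qz cxy.symm (by rw [← hz]; abel), by rw [Finset.insert_comm y x]⟩
      · exact ⟨key _ _ _ qy qz qx cyz (by rw [← hz]; abel), by rw [Finset.pair_comm z x, Finset.insert_comm y x]⟩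
      · exact ⟨key _ _ _ qz qx qy cxz.symm (by rw [← hz]; abel), by rw [Finset.insert_comm z x, Finset.pair_comm z y]⟩
      · exact ⟨key _ _ _ qz qy qx cyz.symm (by rw [← hz]; abel), by rw [Finset.pair_comm y x, Finset.insert_comm z x, Finset.pair_comm z y]⟩
    have h1 : ∑ s ∈ R, 6 ≤
        ∑ s ∈ R, (P.filter (fun t => ({t.1, t.2.1, t.2.2} : Finset ι) = s)).card :=
      Finset.sum_le_sum hfib
    rw [Finset.sum_const, smul_eq_mul] at h1
    rw [Finset.sum_card_fiberwise_eq_card_filter] at h1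
    have h2 := Finset.card_filter_le P (fun t => ({t.1, t.2.1, t.2.2} : Finset ι) ∈ R)
    linarith
  have hts := ts_ineq h3 S (fun u => ((A u).card : ℝ)) (fun u => Nat.cast_nonneg _)
    (by
      intro u hu
      simp only [Nat.cast_eq_zero, Finset.card_eq_zero]
      refine Finset.filter_eq_empty_iff.2 fun i hi h => hu ?_
      rw [← h]
      exact Finset.mem_image_of_mem _ hi)
  have hcard : (((Q.powersetCard 3).filter E).card : ℝ) ≤ M.card + R.card := by
    exact_mod_cast (Finset.card_le_card hsub).trans (Finset.card_union_le _ _)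
  have hR' : 6 * (R.card : ℝ) ≤ P.card := by exact_mod_cast hR
  rw [hsum] at hts
  linarith

open Classical in
theorem averaging {ι : Type*} (E : Finset ι → Prop) (N : ℕ) (B : ℝ) (h3N : 3 ≤ N)
    (hB : ∀ Q : Finset ι, Q.card = N →
      (((Q.powersetCard 3).filter E).card : ℝ) ≤ B * (N.choose 3 : ℝ))
    (P : Finset ι) (hP : N ≤ P.card) :
    (((P.powersetCard 3).filter E).card : ℝ) ≤ B * (P.card.choose 3 : ℝ) := by
  have dc : ∑ Q ∈ P.powersetCard N, ((Q.powersetCard 3).filter E).card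
      = ∑ s ∈ (P.powersetCard 3).filter E, ((P.powersetCard N).filter (fun Q => s ⊆ Q)).card := by
    have key := Finset.sum_card_bipartiteAbove_eq_sum_card_bipartiteBelow
      (s := P.powersetCard N) (t := (P.powersetCard 3).filter E) (fun Q s => s ⊆ Q)
    simp only [Finset.bipartiteAbove, Finset.bipartiteBelow] at key
    trans ∑ a ∈ P.powersetCard N, (((P.powersetCard 3).filter E).filter (fun s => s ⊆ a)).card
    swap
    · convert key
    refine Finset.sum_congr rfl fun Q hQ => ?_
    congr 1
    ext s
    simp only [Finset.mem_filter, Finset.mem_powersetCard] at hQ ⊢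
    constructor
    · rintro ⟨⟨h1, h2⟩, h3⟩
      exact ⟨⟨⟨h1.trans hQ.1, h2⟩, h3⟩, h1⟩
    · rintro ⟨⟨⟨_, h2⟩, h3⟩, h1⟩
      exact ⟨⟨h1, h2⟩, h3⟩
  have hfib : ∀ s ∈ (P.powersetCard 3).filter E,
      ((P.powersetCard N).filter (fun Q => s ⊆ Q)).card = (P.card - 3).choose (N - 3) := by
    intro s hs
    rw [Finset.mem_filter, Finset.mem_powersetCard] at hs
    have : (P.powersetCard N).filter (fun Q => s ⊆ Q) =
        ((P \ s).powersetCard (N - 3)).image (fun Q => Q ∪ s) := by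
      ext Q
      simp only [Finset.mem_filter, Finset.mem_powersetCard, Finset.mem_image]
      constructor
      · rintro ⟨⟨h1, h2⟩, h3⟩
        refine ⟨Q \ s, ⟨Finset.sdiff_subset_sdiff h1 le_rfl, ?_⟩, Finset.sdiff_union_of_subset h3⟩
        rw [Finset.card_sdiff_of_subset h3, h2, hs.1.2]
      · rintro ⟨Q', ⟨h1, h2⟩, rfl⟩
        refine ⟨⟨Finset.union_subset (h1.trans Finset.sdiff_subset) hs.1.1, ?_⟩,
          Finset.subset_union_right⟩
        rw [Finset.card_union_of_disjoint, h2, hs.1.2]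
        · omega
        · exact Finset.disjoint_of_subset_left h1 Finset.sdiff_disjoint
    rw [this, Finset.card_image_of_injOn, Finset.card_powersetCard,
      Finset.card_sdiff_of_subset hs.1.1, hs.1.2]
    intro Q1 h1 Q2 h2 h
    simp only [Finset.mem_coe, Finset.mem_powersetCard] at h1 h2 h
    have d1 : Disjoint Q1 s := Finset.disjoint_of_subset_left h1.1 Finset.sdiff_disjoint
    have d2 : Disjoint Q2 s := Finset.disjoint_of_subset_left h2.1 Finset.sdiff_disjoint
    rw [← Finset.union_sdiff_cancel_right d1, h, Finset.union_sdiff_cancel_right d2]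
  rw [Finset.sum_congr rfl hfib, Finset.sum_const, smul_eq_mul] at dc
  have h1 : (((P.powersetCard 3).filter E).card : ℝ) * ((P.card - 3).choose (N - 3) : ℝ)
      ≤ (P.card.choose N : ℝ) * (B * (N.choose 3 : ℝ)) := by
    have : (∑ Q ∈ P.powersetCard N, (((Q.powersetCard 3).filter E).card : ℝ))
        ≤ ∑ Q ∈ P.powersetCard N, (B * (N.choose 3 : ℝ)) :=
      Finset.sum_le_sum fun Q hQ => hB Q (Finset.mem_powersetCard.1 hQ).2
    rw [Finset.sum_const, Finset.card_powersetCard, nsmul_eq_mul] at this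
    have dc' := congrArg (Nat.cast (R := ℝ)) dc
    push_cast at dc'
    linarith
  have h2 := congrArg (Nat.cast (R := ℝ)) (Nat.choose_mul (n := P.card) h3N)
  push_cast at h2
  have hpos : (0 : ℝ) < ((P.card - 3).choose (N - 3) : ℝ) := by
    exact_mod_cast Nat.choose_pos (by omega)
  refine le_of_mul_le_mul_right ?_ hpos
  calc _ ≤ _ := h1
    _ = B * ((P.card.choose N : ℝ) * (N.choose 3 : ℝ)) := by ring
    _ = _ := by rw [h2]; ring

theorem val_exists (q y : ℂ) (h : AlgebraicIndependent ℤ ![q, y]) :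
    ∃ B : ValuationSubring ℂ, (3 : ℂ) ∈ B.nonunits ∧ q * y + 1 ∈ B.nonunits ∧
      y + 1 ∈ B.nonunits := by
  let f : MvPolynomial (Fin 2) ℤ →+* ℂ := (MvPolynomial.aeval ![q, y]).toRingHom
  have hf : Function.Injective f := h
  let φ : MvPolynomial (Fin 2) ℤ →+* ZMod 3 :=
    MvPolynomial.eval₂Hom (Int.castRingHom (ZMod 3)) ![1, -1]
  let I : Ideal f.range := (RingHom.ker φ).map f.rangeRestrict
  have hI : I ≠ ⊤ := by
    intro hI
    have h1 : (1 : f.range) ∈ I := by rw [hI]; trivial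
    obtain ⟨P, hP, hP1⟩ :=
      (Ideal.mem_map_iff_of_surjective _ f.rangeRestrict_surjective).1 h1
    have h2 : f P = f 1 := by
      have := congrArg Subtype.val hP1
      simpa using this
    have h3 := hf h2
    rw [h3, RingHom.mem_ker, map_one] at hP
    exact absurd hP (by decide)
  obtain ⟨B, _, hB⟩ := I.image_subset_nonunits_valuationSubring hI
  have key : ∀ P, φ P = 0 → f P ∈ B.nonunits := by
    intro P hP
    apply hB
    exact ⟨f.rangeRestrict P, Ideal.mem_map_of_mem _ ((RingHom.mem_ker).2 hP), rfl⟩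
  refine ⟨B, ?_, ?_, ?_⟩
  · have := key 3 (by rw [map_ofNat]; decide)
    rwa [map_ofNat] at this
  · have := key (MvPolynomial.X 0 * MvPolynomial.X 1 + 1) (by simp [φ])
    simpa [f] using this
  · have := key (MvPolynomial.X 1 + 1) (by simp [φ])
    simpa [f] using this

theorem res_three (B : ValuationSubring ℂ) (h3 : (3 : ℂ) ∈ B.nonunits) :
    ∀ u : IsLocalRing.ResidueField B, u + u + u = 0 := by
  intro u
  have h : (3 : IsLocalRing.ResidueField B) = 0 := by
    have h1 : IsLocalRing.residue B (3 : B) = 0 := by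
      rw [IsLocalRing.residue_eq_zero_iff, ← ValuationSubring.coe_mem_nonunits_iff]
      exact h3
    rwa [map_ofNat] at h1
  linear_combination u * h

theorem val_color {ι : Type*} [Finite ι] [Nonempty ι] (B : ValuationSubring ℂ)
    (h3 : (3 : ℂ) ∈ B.nonunits) (p : ι → ℂ) (hp : ∃ i j, p i ≠ p j) :
    ∃ c : ι → IsLocalRing.ResidueField B, (∃ i j, c i ≠ c j) ∧
      ∀ w, w + 1 ∈ B.nonunits → ∀ a b d, p d - p a = w * (p b - p a) →
        c a + c b + c d = 0 := by
  obtain ⟨⟨i0, j0⟩, hmax⟩ := Finite.exists_max (fun t : ι × ι => B.valuation (p t.1 - p t.2))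
  have hD : p i0 - p j0 ≠ 0 := by
    intro h0
    obtain ⟨i, j, hij⟩ := hp
    have := hmax (i, j)
    simp only [h0, map_zero] at this
    have h1 := le_zero_iff.1 this
    rw [map_eq_zero, sub_eq_zero] at h1
    exact hij h1
  have hmem : ∀ i, (p i - p j0) / (p i0 - p j0) ∈ B := by
    intro i
    rw [← B.valuation_le_one_iff, map_div₀]
    exact div_le_one_of_le₀ (hmax (i, j0)) zero_le
  let r : ι → B := fun i => ⟨_, hmem i⟩
  refine ⟨fun i => IsLocalRing.residue B (r i), ⟨i0, j0, ?_⟩, ?_⟩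
  · have e1 : r i0 = 1 := Subtype.ext (by simp [r, div_self hD])
    have e2 : r j0 = 0 := Subtype.ext (by simp [r])
    simp [e1, e2]
  · intro w hw a b d h
    have hwB : w + 1 ∈ B := by
      rw [← B.valuation_le_one_iff]
      exact ((ValuationSubring.mem_nonunits_iff _).1 hw).le
    have e : r d - r a = (⟨w + 1, hwB⟩ - 1) * (r b - r a) := by
      apply Subtype.ext
      simp only [r]
      push_cast
      field_simp
      linear_combination h
    have e' := congrArg (IsLocalRing.residue B) e
    have hz : IsLocalRing.residue B ⟨w + 1, hwB⟩ = 0 := by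
      rw [IsLocalRing.residue_eq_zero_iff, ← ValuationSubring.coe_mem_nonunits_iff]
      exact hw
    rw [map_sub, map_mul, map_sub, map_sub, hz, map_one] at e'
    have h4 := res_three B h3 (IsLocalRing.residue B (r a))
    linear_combination e' + h4

open Filter Topology in
theorem compact_color (B : ValuationSubring ℂ) (h3 : (3 : ℂ) ∈ B.nonunits)
    (W : Set ℂ) (hfin : W.Finite) (hW : ∀ w ∈ W, w + 1 ∈ B.nonunits) (n : ℕ) (hn : 2 ≤ n) :
    ∃ δ > (0 : ℝ), ∀ f : Fin n → ℂ, Function.Injective f →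
      ∃ c : Fin n → IsLocalRing.ResidueField B, (∃ i j, c i ≠ c j) ∧
        ∀ w ∈ W, ∀ a b d, ‖(f d - f a) - w * (f b - f a)‖ ≤ δ * ‖f b - f a‖ →
          c a + c b + c d = 0 := by
  by_contra hcon
  push Not at hcon
  have : NeZero n := ⟨by omega⟩
  choose f hf hbad using fun m : ℕ => hcon (1 / ((m : ℝ) + 1)) (by positivity)
  let g0 : ℕ → Fin n → ℂ := fun m i => f m i - f m 0
  have hg0 : ∀ m, 0 < ‖g0 m‖ := by
    intro m
    rw [norm_pos_iff]
    intro h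
    have h1 := congrFun h ⟨1, by omega⟩
    simp only [g0, Pi.zero_apply, sub_eq_zero] at h1
    have h2 := hf m h1
    have h3 := congrArg Fin.val h2
    simp at h3
  let g : ℕ → Fin n → ℂ := fun m => ((‖g0 m‖⁻¹ : ℝ) : ℂ) • g0 m
  have hg : ∀ m, g m ∈ Metric.sphere (0 : Fin n → ℂ) 1 := by
    intro m
    rw [mem_sphere_zero_iff_norm, norm_smul, Complex.norm_real, norm_inv, norm_norm]
    exact inv_mul_cancel₀ (hg0 m).ne'
  obtain ⟨p, hp, φ, hφ, hlim⟩ := (isCompact_sphere (0 : Fin n → ℂ) 1).tendsto_subseq hg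
  have hlim' : ∀ i, Tendsto (fun m => g (φ m) i) atTop (𝓝 (p i)) :=
    fun i => (tendsto_pi_nhds.1 hlim) i
  have hp0 : p 0 = 0 := by
    refine tendsto_nhds_unique (hlim' 0) ?_
    simp [g, g0]
  have hpne : ∃ i j, p i ≠ p j := by
    by_contra hc
    push Not at hc
    have : p = 0 := by
      ext i
      rw [hc i 0, hp0]; rfl
    rw [this] at hp
    simp at hp
  obtain ⟨c, hc1, hc2⟩ := val_color B h3 p hpne
  have ev : ∀ᶠ m in atTop, ∀ w ∈ W, ∀ a b d, c a + c b + c d ≠ 0 →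
      1 / (((φ m : ℕ) : ℝ) + 1) * ‖g (φ m) b - g (φ m) a‖ <
        ‖(g (φ m) d - g (φ m) a) - w * (g (φ m) b - g (φ m) a)‖ := by
    rw [hfin.eventually_all]
    intro w hw
    rw [eventually_all]; intro a
    rw [eventually_all]; intro b
    rw [eventually_all]; intro d
    by_cases hs : c a + c b + c d = 0
    · exact Eventually.of_forall fun m h => absurd hs h
    have hne : p d - p a ≠ w * (p b - p a) := fun h => hs (hc2 w (hW w hw) a b d h)
    have t1 : Tendsto (fun m => ‖(g (φ m) d - g (φ m) a) - w * (g (φ m) b - g (φ m) a)‖) atTop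
        (𝓝 ‖(p d - p a) - w * (p b - p a)‖) :=
      (((hlim' d).sub (hlim' a)).sub (((hlim' b).sub (hlim' a)).const_mul w)).norm
    have t2 : Tendsto (fun m => 1 / (((φ m : ℕ) : ℝ) + 1) * ‖g (φ m) b - g (φ m) a‖) atTop
        (𝓝 (0 * ‖p b - p a‖)) :=
      (tendsto_one_div_add_atTop_nhds_zero_nat.comp hφ.tendsto_atTop).mul
        ((hlim' b).sub (hlim' a)).norm
    rw [zero_mul] at t2
    have hpos : 0 < ‖(p d - p a) - w * (p b - p a)‖ := norm_pos_iff.2 (sub_ne_zero.2 hne)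
    filter_upwards [t2.eventually_lt t1 hpos] with m hm _
    exact hm
  obtain ⟨m, hm⟩ := ev.exists
  obtain ⟨i, j, hij⟩ := hc1
  obtain ⟨w, hw, a, b, d, hle, hne⟩ := hbad (φ m) c ⟨i, j, hij⟩
  have hlt := hm w hw a b d hne
  have es : ∀ s t, g (φ m) s - g (φ m) t
      = ((‖g0 (φ m)‖⁻¹ : ℝ) : ℂ) * (f (φ m) s - f (φ m) t) := by
    intro s t
    simp only [g, g0, Pi.smul_apply, smul_eq_mul]
    ring
  have e2 : (g (φ m) d - g (φ m) a) - w * (g (φ m) b - g (φ m) a)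
      = ((‖g0 (φ m)‖⁻¹ : ℝ) : ℂ) * ((f (φ m) d - f (φ m) a) - w * (f (φ m) b - f (φ m) a)) := by
    rw [es, es]; ring
  rw [e2, es, norm_mul, norm_mul, Complex.norm_real, norm_inv, norm_norm] at hlt
  have hpos : 0 < ‖g0 (φ m)‖⁻¹ := inv_pos.2 (hg0 _)
  have := mul_le_mul_of_nonneg_left hle hpos.le
  linarith

/-- The apex ratio. -/
noncomputable def apexRatio (s : ℝ × ℝ) : ℂ :=
  ((Real.sin s.2 / Real.sin (s.1 + s.2) : ℝ) : ℂ) * Complex.exp (s.1 * Complex.I)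

open EuclideanGeometry in
theorem ratio_of_angles (a b d : ℂ) (hab : a ≠ b) (had : a ≠ d) (hbd : b ≠ d)
    (hs : Real.sin (∠ b a d + ∠ a b d) ≠ 0) :
    d - a = apexRatio (∠ b a d, ∠ a b d) * (b - a) ∨
    d - a = (starRingEnd ℂ) (apexRatio (∠ b a d, ∠ a b d)) * (b - a) := by
  have hba : b - a ≠ 0 := sub_ne_zero.2 hab.symm
  have hda : d - a ≠ 0 := sub_ne_zero.2 had.symm
  have hang : ∠ b a d = |((d - a) / (b - a)).arg| := by
    rw [EuclideanGeometry.angle_comm, EuclideanGeometry.angle]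
    exact Complex.angle_eq_abs_arg hda hba
  have hnorm : ‖(d - a) / (b - a)‖ = Real.sin (∠ a b d) / Real.sin (∠ b a d + ∠ a b d) := by
    have h1 := EuclideanGeometry.angle_add_angle_add_angle_eq_pi (p₁ := a) (p₂ := b) d hab.symm
    have h2 : Real.sin (∠ b a d + ∠ a b d) = Real.sin (∠ b d a) := by
      rw [← Real.sin_pi_sub]
      congr 1
      rw [EuclideanGeometry.angle_comm b a d]
      linarith
    have h3 := EuclideanGeometry.sin_angle_mul_dist_eq_sin_angle_mul_dist b d a
    rw [h2] at hs ⊢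
    rw [norm_div, ← dist_eq_norm, ← dist_eq_norm]
    rw [div_eq_div_iff (dist_ne_zero.2 hab.symm) hs]
    rw [dist_comm b a, mul_comm, h3]
  set r := (d - a) / (b - a) with hr
  have hd : d - a = r * (b - a) := by rw [hr]; field_simp
  have hpol := Complex.norm_mul_exp_arg_mul_I r
  rcases abs_choice r.arg with h | h
  · left
    rw [hd]; congr 1
    rw [← hpol, apexRatio, hnorm, hang, h]
  · right
    rw [hd]; congr 1
    rw [← hpol, apexRatio, hnorm, hang, h, map_mul, Complex.conj_ofReal, ← Complex.exp_conj]
    simp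

theorem apex_cont (α β : ℝ) (h : Real.sin (α + β) ≠ 0) : ContinuousAt apexRatio (α, β) := by
  unfold apexRatio
  have h1 : ContinuousAt (fun s : ℝ × ℝ => Real.sin s.2 / Real.sin (s.1 + s.2)) (α, β) := by
    apply ContinuousAt.div
    · fun_prop
    · fun_prop
    · exact h
  have h2 : ContinuousAt (fun s : ℝ × ℝ => ((Real.sin s.2 / Real.sin (s.1 + s.2) : ℝ) : ℂ)) (α, β) :=
    Complex.continuous_ofReal.continuousAt.comp h1
  exact h2.mul (by fun_prop)

open EuclideanGeometry in
theorem geo_eps (α β : ℝ) (hα : 0 < α) (hβ : 0 < β) (hαβ : α + β < Real.pi) (δ : ℝ) (hδ : 0 < δ) :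
    ∃ ε > 0, ∀ a b d : ℂ, a ≠ b → a ≠ d → b ≠ d →
      |∠ b a d - α| < ε → |∠ a b d - β| < ε →
      ∃ w ∈ ({apexRatio (α, β), (starRingEnd ℂ) (apexRatio (α, β))} : Set ℂ),
        ‖(d - a) - w * (b - a)‖ ≤ δ * ‖b - a‖ := by
  have hs : Real.sin (α + β) ≠ 0 := (Real.sin_pos_of_pos_of_lt_pi (by linarith) hαβ).ne'
  have hc := apex_cont α β hs
  rw [Metric.continuousAt_iff] at hc
  obtain ⟨ε1, he1, h1⟩ := hc δ hδ
  have hc2 : ContinuousAt (fun s : ℝ × ℝ => Real.sin (s.1 + s.2)) (α, β) := by fun_prop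
  have hc3 := hc2.eventually_ne hs
  rw [Metric.eventually_nhds_iff] at hc3
  obtain ⟨ε2, he2, h2⟩ := hc3
  refine ⟨min ε1 ε2, lt_min he1 he2, ?_⟩
  intro a b d hab had hbd ha hb
  have hdist : dist ((∠ b a d, ∠ a b d) : ℝ × ℝ) (α, β) < min ε1 ε2 := by
    rw [Prod.dist_eq, max_lt_iff]
    exact ⟨by simpa [Real.dist_eq] using ha, by simpa [Real.dist_eq] using hb⟩
  have k1 := (h1 (hdist.trans_le (min_le_left _ _))).le
  have k2 := h2 (hdist.trans_le (min_le_right _ _))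
  rcases ratio_of_angles a b d hab had hbd k2 with h | h
  · refine ⟨apexRatio (α, β), by simp, ?_⟩
    rw [h, ← sub_mul, norm_mul]
    rw [dist_eq_norm] at k1
    exact mul_le_mul_of_nonneg_right k1 (norm_nonneg _)
  · refine ⟨(starRingEnd ℂ) (apexRatio (α, β)), by simp, ?_⟩
    rw [h, ← sub_mul, norm_mul, ← map_sub, Complex.norm_conj]
    rw [dist_eq_norm] at k1
    exact mul_le_mul_of_nonneg_right k1 (norm_nonneg _)

/-- `e^{2iα}`. -/
noncomputable def qv (s : ℝ × ℝ) : ℂ := Complex.exp (2 * s.1 * Complex.I)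
/-- conjugate apex. -/
noncomputable def yv (s : ℝ × ℝ) : ℂ :=
  ((Real.sin s.2 / Real.sin (s.1 + s.2) : ℝ) : ℂ) * Complex.exp (-(s.1 * Complex.I))

theorem yv_eq (s : ℝ × ℝ) : (starRingEnd ℂ) (apexRatio s) = yv s := by
  rw [apexRatio, yv, map_mul, Complex.conj_ofReal, ← Complex.exp_conj]
  simp

theorem qy_eq (s : ℝ × ℝ) : qv s * yv s = apexRatio s := by
  rw [apexRatio, yv, qv, mul_left_comm, ← Complex.exp_add]
  congr 2
  ring

theorem meas_qv : Measurable qv := by unfold qv; fun_prop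
theorem meas_yv : Measurable yv := by
  unfold yv
  have : Measurable (fun s : ℝ × ℝ => Real.sin s.2 / Real.sin (s.1 + s.2)) := by fun_prop
  exact (Complex.measurable_ofReal.comp this).mul (by fun_prop)

theorem bad_alpha_countable :
    {α : ℝ | (0 < α ∧ α < Real.pi) ∧ IsAlgebraic ℤ (Complex.exp (2 * α * Complex.I))}.Countable := by
  have hinj : Set.InjOn (fun α : ℝ => Complex.exp (2 * α * Complex.I)) {α | 0 < α ∧ α < Real.pi} := by
    intro x hx y hy h
    simp only at h
    rw [Complex.exp_eq_exp_iff_exists_int] at h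
    obtain ⟨m, hm⟩ := h
    have h1 : (x : ℂ) = y + m * Real.pi := by
      have hI := Complex.I_ne_zero
      have : (2 * Complex.I) * (x : ℂ) = (2 * Complex.I) * (y + m * Real.pi) := by
        linear_combination hm
      exact mul_left_cancel₀ (by simp) this
    have h2 : x = y + m * Real.pi := by exact_mod_cast h1
    have hx1 := hx.1; have hx2 := hx.2; have hy1 := hy.1; have hy2 := hy.2
    have l1 : (m : ℝ) < 1 := by
      by_contra hc; push Not at hc
      nlinarith [Real.pi_pos]
    have l2 : (-1 : ℝ) < m := by
      by_contra hc; push Not at hc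
      nlinarith [Real.pi_pos]
    have l1' : m < 1 := by exact_mod_cast l1
    have l2' : -1 < m := by exact_mod_cast l2
    have : m = 0 := by omega
    rw [h2, this]; simp
  have hc := Algebraic.countable ℤ ℂ
  refine Set.MapsTo.countable_of_injOn (f := fun α : ℝ => Complex.exp (2 * α * Complex.I))
    (t := {x : ℂ | IsAlgebraic ℤ x}) ?_ (hinj.mono fun x hx => hx.1) hc
  intro x hx
  exact hx.2

theorem bad_beta_countable (α : ℝ) (h0 : 0 < α) (h1 : α < Real.pi) (R : Subalgebra ℤ ℂ)
    [Countable R] :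
    {β : ℝ | (0 < β ∧ α + β < Real.pi) ∧ IsAlgebraic R (yv (α, β))}.Countable := by
  have hinj : Set.InjOn (fun β : ℝ => yv (α, β)) {β | 0 < β ∧ α + β < Real.pi} := by
    intro x hx y hy h
    have hx1 := hx.1; have hx2 := hx.2; have hy1 := hy.1; have hy2 := hy.2
    simp only [yv] at h
    have h2 := mul_right_cancel₀ (Complex.exp_ne_zero _) h
    have h3 := Complex.ofReal_injective h2
    have sx : Real.sin (α + x) ≠ 0 := (Real.sin_pos_of_pos_of_lt_pi (by linarith) hx2).ne'
    have sy : Real.sin (α + y) ≠ 0 := (Real.sin_pos_of_pos_of_lt_pi (by linarith) hy2).ne'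
    have sa : Real.sin α ≠ 0 := (Real.sin_pos_of_pos_of_lt_pi h0 h1).ne'
    rw [div_eq_div_iff sx sy, Real.sin_add, Real.sin_add] at h3
    have h4 : Real.sin α * Real.sin (x - y) = 0 := by
      rw [Real.sin_sub]; linear_combination h3
    have h5 := (mul_eq_zero.1 h4).resolve_left sa
    have h6 := (Real.sin_eq_zero_iff_of_lt_of_lt (by linarith) (by linarith)).1 h5
    linarith
  have hc := Algebraic.countable R ℂ
  refine Set.MapsTo.countable_of_injOn (f := fun β : ℝ => yv (α, β))
    (t := {x : ℂ | IsAlgebraic R x}) ?_ (hinj.mono fun x hx => hx.1) hc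
  intro x hx
  exact hx.2

theorem countable_adj (x : ℂ) : Countable (Algebra.adjoin ℤ {x}) := by
  rw [Algebra.adjoin_singleton_eq_range_aeval ℤ x]
  have hP : Countable (Polynomial ℤ) := by
    rw [← Cardinal.mk_le_aleph0_iff]
    exact (Polynomial.cardinalMk_le_max).trans (by simp)
  exact (AlgHom.rangeRestrict_surjective (Polynomial.aeval (R := ℤ) x)).countable

theorem meas_aeval (P : MvPolynomial (Fin 2) ℤ) :
    Measurable (fun s : ℝ × ℝ => MvPolynomial.aeval ![qv s, yv s] P) := by
  have hc : Continuous (fun v : Fin 2 → ℂ => MvPolynomial.aeval v P) := by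
    simp only [MvPolynomial.aeval_def, MvPolynomial.eval₂_eq_eval_map]
    exact MvPolynomial.continuous_eval _
  have hv : Measurable (fun s : ℝ × ℝ => ![qv s, yv s]) := by
    refine measurable_pi_lambda _ fun i => ?_
    fin_cases i
    · exact meas_qv
    · exact meas_yv
  have hm := hc.measurable
  generalize hF : (fun v : Fin 2 → ℂ => MvPolynomial.aeval v P) = F at hm
  have := hm.comp hv
  rw [← hF] at this
  exact this

open MeasureTheory in
theorem ae_indep : ∀ᵐ s : ℝ × ℝ ∂(MeasureTheory.volume.restrict
        {q : ℝ × ℝ | 0 < q.1 ∧ 0 < q.2 ∧ q.1 + q.2 < Real.pi}),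
    AlgebraicIndependent ℤ ![qv s, yv s] := by
  have hmeasR : MeasurableSet {q : ℝ × ℝ | 0 < q.1 ∧ 0 < q.2 ∧ q.1 + q.2 < Real.pi} :=
    (measurableSet_lt measurable_const measurable_fst).inter
      ((measurableSet_lt measurable_const measurable_snd).inter
        (measurableSet_lt (measurable_fst.add measurable_snd) measurable_const))
  rw [ae_restrict_iff' hmeasR]
  have key : ∀ P : MvPolynomial (Fin 2) ℤ, P ≠ 0 →
      ∀ᵐ s : ℝ × ℝ, ¬ ((0 < s.1 ∧ 0 < s.2 ∧ s.1 + s.2 < Real.pi) ∧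
        MvPolynomial.aeval ![qv s, yv s] P = 0) := by
    intro P hP
    rw [ae_iff]
    simp only [not_not]
    have hm := meas_aeval P
    have hms : MeasurableSet {s : ℝ × ℝ | (0 < s.1 ∧ 0 < s.2 ∧ s.1 + s.2 < Real.pi) ∧
        MvPolynomial.aeval ![qv s, yv s] P = 0} :=
      hmeasR.inter (hm (measurableSet_singleton 0))
    rw [Measure.volume_eq_prod, Measure.measure_prod_null hms]
    have hbad := bad_alpha_countable.ae_notMem (volume : Measure ℝ)
    filter_upwards [hbad] with α hα
    by_cases hr : 0 < α ∧ α < Real.pi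
    swap
    · refine measure_mono_null (t := ∅) ?_ measure_empty
      rintro β ⟨⟨h1, h2, h3⟩, -⟩
      exact (hr ⟨h1, by linarith⟩).elim
    have htr : Transcendental ℤ (Complex.exp (2 * α * Complex.I)) := fun h => hα ⟨hr, h⟩
    have hq : AlgebraicIndependent ℤ (fun _ : {j : Fin 2 // j ≠ 1} =>
        Complex.exp (2 * α * Complex.I)) := by
      have : Unique {j : Fin 2 // j ≠ 1} := ⟨⟨⟨0, by decide⟩⟩, by decide⟩
      exact algebraicIndependent_unique_type_iff.2 htr
    let R : Subalgebra ℤ ℂ := Algebra.adjoin ℤ {Complex.exp (2 * α * Complex.I)}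
    have hcR : Countable R := countable_adj _
    refine measure_mono_null ?_ ((bad_beta_countable α hr.1 hr.2 R).measure_zero volume)
    rintro β ⟨⟨h1, h2, h3⟩, h4⟩
    refine ⟨⟨h2, h3⟩, ?_⟩
    by_contra hna
    have hind : AlgebraicIndependent ℤ ![qv (α, β), yv (α, β)] := by
      rw [AlgebraicIndependent.iff_transcendental_adjoin_image 1]
      constructor
      · convert hq with j
        obtain ⟨j, hj⟩ := j
        fin_cases j
        · simp [qv]
        · exact absurd rfl hj
      · have him : (![qv (α, β), yv (α, β)] '' {1}ᶜ) = {Complex.exp (2 * α * Complex.I)} := by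
          have : ({1}ᶜ : Set (Fin 2)) = {0} := by ext i; fin_cases i <;> simp
          rw [this]; simp [qv]
        rw [him]
        exact hna
    exact hP (hind.eq_zero_of_aeval_eq_zero P h4)
  have hall : ∀ᵐ s : ℝ × ℝ, ∀ P : MvPolynomial (Fin 2) ℤ, P ≠ 0 →
      ¬ ((0 < s.1 ∧ 0 < s.2 ∧ s.1 + s.2 < Real.pi) ∧
        MvPolynomial.aeval ![qv s, yv s] P = 0) := by
    have : Countable (MvPolynomial (Fin 2) ℤ) := by
      rw [← Cardinal.mk_le_aleph0_iff]
      exact (MvPolynomial.cardinalMk_le_max).trans (by simp)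
    rw [ae_all_iff]
    intro P
    by_cases hP : P = 0
    · exact Filter.Eventually.of_forall fun s h => absurd hP h
    · filter_upwards [key P hP] with s hs _ using hs
  filter_upwards [hall] with s hs hr
  rw [algebraicIndependent_iff]
  intro P hP0
  by_contra hP
  exact hs P hP ⟨hr, hP0⟩

theorem triAngle_perm_s9 (p : Fin 3 → Plane) (i j l : Fin 3) (hij : i ≠ j) (hil : i ≠ l)
    (hjl : j ≠ l) : triAngle p i = EuclideanGeometry.angle (p j) (p i) (p l) := by
  unfold triAngle
  fin_cases i <;> fin_cases j <;> fin_cases l <;> simp at hij hil hjl <;>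
    first
      | rfl
      | exact EuclideanGeometry.angle_comm _ _ _

/-- Identification of the plane with `ℂ`. -/
def toC : Plane ≃ₗᵢ[ℝ] ℂ := Complex.orthonormalBasisOneI.repr.symm

theorem angle_toC (a b c : Plane) :
    EuclideanGeometry.angle (toC a) (toC b) (toC c) = EuclideanGeometry.angle a b c := by
  simp only [EuclideanGeometry.angle, vsub_eq_sub, ← map_sub]
  exact LinearIsometry.angle_map toC.toLinearIsometry _ _

theorem uniform_delta (B : ValuationSubring ℂ) (h3 : (3 : ℂ) ∈ B.nonunits)
    (W : Set ℂ) (hfin : W.Finite) (hW : ∀ w ∈ W, w + 1 ∈ B.nonunits) (N : ℕ) :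
    ∃ δ > (0 : ℝ), ∀ n, 2 ≤ n → n ≤ N → ∀ f : Fin n → ℂ, Function.Injective f →
      ∃ c : Fin n → IsLocalRing.ResidueField B, (∃ i j, c i ≠ c j) ∧
        ∀ w ∈ W, ∀ a b d, ‖(f d - f a) - w * (f b - f a)‖ ≤ δ * ‖f b - f a‖ →
          c a + c b + c d = 0 := by
  induction N with
  | zero => exact ⟨1, one_pos, fun n h1 h2 => by omega⟩
  | succ N ih =>
    obtain ⟨δ, hδ, h⟩ := ih
    by_cases hN : 2 ≤ N + 1
    · obtain ⟨δ', hδ', h'⟩ := compact_color B h3 W hfin hW (N + 1) hN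
      refine ⟨min δ δ', lt_min hδ hδ', ?_⟩
      intro n h2 hn f hf
      rcases Nat.lt_or_ge n (N + 1) with hlt | hge
      · obtain ⟨c, hc1, hc2⟩ := h n h2 (by omega) f hf
        refine ⟨c, hc1, fun w hw a b d hle => hc2 w hw a b d (hle.trans ?_)⟩
        exact mul_le_mul_of_nonneg_right (min_le_left _ _) (norm_nonneg _)
      · obtain rfl : n = N + 1 := by omega
        obtain ⟨c, hc1, hc2⟩ := h' f hf
        refine ⟨c, hc1, fun w hw a b d hle => hc2 w hw a b d (hle.trans ?_)⟩
        exact mul_le_mul_of_nonneg_right (min_le_right _ _) (norm_nonneg _)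
    · exact ⟨1, one_pos, fun n h1 h2 => by omega⟩

theorem color_plane (s : ℝ × ℝ) (hr : 0 < s.1 ∧ 0 < s.2 ∧ s.1 + s.2 < Real.pi)
    (B : ValuationSubring ℂ) (h3 : (3 : ℂ) ∈ B.nonunits)
    (hx : apexRatio s + 1 ∈ B.nonunits) (hy : yv s + 1 ∈ B.nonunits)
    (T : Fin 3 → Plane) (hT0 : triAngle T 0 = s.1) (hT1 : triAngle T 1 = s.2) (N : ℕ) :
    ∃ ε > 0, ∀ Q : Finset Plane, 2 ≤ Q.card → Q.card ≤ N →
      ∃ c : Plane → IsLocalRing.ResidueField B,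
      (∃ i ∈ Q, ∃ j ∈ Q, c i ≠ c j) ∧
      ∀ S ⊆ Q, S.card = 3 → FormsSimilar ε T S → ∑ i ∈ S, c i = 0 := by
  classical
  obtain ⟨δ, hδ, hcol⟩ := uniform_delta B h3
    ({apexRatio (s.1, s.2), (starRingEnd ℂ) (apexRatio (s.1, s.2))} : Set ℂ)
    (by simp) (by
      intro w hw
      simp only [Set.mem_insert_iff, Set.mem_singleton_iff] at hw
      rcases hw with rfl | rfl
      · exact hx
      · rw [yv_eq]; exact hy) N
  obtain ⟨ε, hε, hgeo⟩ := geo_eps s.1 s.2 hr.1 hr.2.1 hr.2.2 δ hδ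
  refine ⟨ε, hε, ?_⟩
  intro Q hQ2 hQN
  let e := Q.equivFin
  obtain ⟨c', ⟨i, j, hij⟩, hc2⟩ := hcol Q.card hQ2 hQN (fun t => toC (e.symm t).1) (by
    intro t t' h
    exact e.symm.injective (Subtype.ext (toC.injective h)))
  refine ⟨fun P => if h : P ∈ Q then c' (e ⟨P, h⟩) else 0,
    ⟨(e.symm i).1, (e.symm i).2, (e.symm j).1, (e.symm j).2, ?_⟩, ?_⟩
  · simp [hij]
  · intro S hSQ hS3 hS
    obtain ⟨p, hSp, -, σ, hσ⟩ := hS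
    have hp : Function.Injective p := by
      have h1 : S = Finset.univ.image p := by
        apply Finset.coe_injective
        rw [hSp]; simp
      have h2 : (Finset.univ.image p).card = (Finset.univ : Finset (Fin 3)).card := by
        rw [← h1, hS3]; rfl
      have h4 := Finset.card_image_iff.1 h2
      intro x y hxy
      exact h4 (by simp) (by simp) hxy
    have n01 : σ.symm 0 ≠ σ.symm 1 := fun h => absurd (σ.symm.injective h) (by decide)
    have n02 : σ.symm 0 ≠ σ.symm 2 := fun h => absurd (σ.symm.injective h) (by decide)
    have n12 : σ.symm 1 ≠ σ.symm 2 := fun h => absurd (σ.symm.injective h) (by decide)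
    set a := p (σ.symm 0) with ha
    set b := p (σ.symm 1) with hb
    set d := p (σ.symm 2) with hd
    have hab : a ≠ b := fun h => n01 (hp h)
    have had : a ≠ d := fun h => n02 (hp h)
    have hbd : b ≠ d := fun h => n12 (hp h)
    have k0 := hσ (σ.symm 0)
    have k1 := hσ (σ.symm 1)
    rw [Equiv.apply_symm_apply, hT0, triAngle_perm_s9 p _ _ _ n01 n02 n12, ← angle_toC] at k0
    rw [Equiv.apply_symm_apply, hT1, triAngle_perm_s9 p _ _ _ n01.symm n12 n02, ← angle_toC] at k1
    obtain ⟨w, hw, hle⟩ := hgeo (toC a) (toC b) (toC d) (toC.injective.ne hab)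
      (toC.injective.ne had) (toC.injective.ne hbd) k0 k1
    have mem : ∀ t, p t ∈ S := by
      intro t
      rw [← Finset.mem_coe, hSp]
      exact ⟨t, rfl⟩
    have hSe : S = {a, b, d} := by
      symm
      apply Finset.eq_of_subset_of_card_le
      · intro t ht
        simp only [Finset.mem_insert, Finset.mem_singleton] at ht
        rcases ht with h | h | h <;> rw [h] <;> exact mem _
      · rw [hS3, Finset.card_eq_three.2 ⟨a, b, d, hab, had, hbd, rfl⟩]
    have aQ : a ∈ Q := hSQ (mem _)
    have bQ : b ∈ Q := hSQ (mem _)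
    have dQ : d ∈ Q := hSQ (mem _)
    have := hc2 w hw (e ⟨a, aQ⟩) (e ⟨b, bQ⟩) (e ⟨d, dQ⟩) (by simpa using hle)
    rw [hSe, Finset.sum_insert (by simp [hab, had]), Finset.sum_pair hbd]
    simp only [aQ, bQ, dQ, dif_pos]
    rw [← this]; abel

open Classical in
theorem simCount_eq (ε : ℝ) (T : Fin 3 → Plane) (P : Finset Plane) :
    simCount ε T P = ((P.powersetCard 3).filter (FormsSimilar ε T)).card := by
  rw [simCount, ← Set.ncard_coe_finset]
  congr 1
  ext S
  simp [Finset.mem_powersetCard, and_assoc]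

/-- For almost every pair `(α, β)` of angles, any triangle `T` with angles
`α, β, π - α - β` satisfies: there is `ε > 0` with
`limsup h(n, T, ε)/C(n,3) ≤ 0.25108`. -/
theorem stmt_9 :
    ∀ᵐ p : ℝ × ℝ ∂(MeasureTheory.volume.restrict
        {q : ℝ × ℝ | 0 < q.1 ∧ 0 < q.2 ∧ q.1 + q.2 < Real.pi}),
      ∀ T : Fin 3 → Plane, IsTriangle T →
        triAngle T 0 = p.1 → triAngle T 1 = p.2 →
        ∃ ε : ℝ, 0 < ε ∧
          Filter.limsup (fun n : ℕ => (hGeo n T ε : ℝ) / (Nat.choose n 3 : ℝ))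
            Filter.atTop ≤ 0.25108 := by
  have hmeasR : MeasurableSet {q : ℝ × ℝ | 0 < q.1 ∧ 0 < q.2 ∧ q.1 + q.2 < Real.pi} :=
    (measurableSet_lt measurable_const measurable_fst).inter
      ((measurableSet_lt measurable_const measurable_snd).inter
        (measurableSet_lt (measurable_fst.add measurable_snd) measurable_const))
  filter_upwards [ae_indep, MeasureTheory.ae_restrict_mem hmeasR] with s hs hr T _ hT0 hT1
  classical
  obtain ⟨B, h3, hx, hy⟩ := val_exists _ _ hs
  rw [qy_eq] at hx
  obtain ⟨ε, hε, hcol⟩ := color_plane s hr B h3 hx hy T hT0 hT1 700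
  refine ⟨ε, hε, ?_⟩
  have hbd := edge_bound (res_three B h3) (FormsSimilar ε T) 700 hcol 700
  have hB : ∀ Q : Finset Plane, Q.card = 700 →
      (((Q.powersetCard 3).filter (FormsSimilar ε T)).card : ℝ)
        ≤ 0.25108 * ((Nat.choose 700 3 : ℕ) : ℝ) := by
    intro Q hQ
    have h1 := hbd Q hQ le_rfl
    have h2 : Nat.choose 700 3 = 56921900 := by
      rw [Nat.choose_eq_descFactorial_div_factorial]; norm_num [Nat.descFactorial, Nat.factorial]
    rw [h2]
    norm_num at h1 ⊢
    linarith
  refine Filter.limsup_le_of_le ?_ ?_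
  · exact Filter.isCoboundedUnder_le_of_le (x := 0) Filter.atTop (fun n => by positivity)
  filter_upwards [Filter.eventually_ge_atTop 700] with n hn
  refine div_le_of_le_mul₀ (Nat.cast_nonneg _) (by norm_num) ?_
  have hnn : (0 : ℝ) ≤ 0.25108 * ((Nat.choose n 3 : ℕ) : ℝ) := by positivity
  have hle : hGeo n T ε ≤ ⌊(0.25108 : ℝ) * ((Nat.choose n 3 : ℕ) : ℝ)⌋₊ := by
    apply csSup_le
    · obtain ⟨P, hP⟩ := Infinite.exists_subset_card_eq Plane n
      exact ⟨_, P, hP, rfl⟩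
    · rintro m ⟨P, hP, rfl⟩
      apply Nat.le_floor
      rw [simCount_eq, ← hP]
      exact averaging (FormsSimilar ε T) 700 0.25108 (by norm_num) hB P (by omega)
  exact (Nat.cast_le.2 hle).trans (Nat.floor_le hnn)

end
end
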